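/- arXiv:1705.06838 — 3 statements merged into one kernel-verified Lean document; each statement's English description precedes it below -/
import Mathlib

section
/- Let k, p ≥ 2 and let S ⊆ T(k) be a full and decreasing family of reflexive functions. Then there exist a set E ⊆ A ⊆ N with |E| = p and a function f ∈ S with domain A^k such that f is regressively regular over E; in particular, f has at most k^k regressive values on E^k ⊆ domain(f). -/
open scoped Classical

/-- The maximum coordinate of a `k`-tuple of nonnegative integers. -/
def maxv {k : ℕ} (z : Fin k → ℕ) : ℕ := Finset.univ.sup z

/-- The minimum coordinate of a `k`-tuple of nonnegative integers. -/
noncomputable def minv {k : ℕ} (z : Fin k → ℕ) : ℕ := sInf (Set.range z)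

/-- A directed graph `(N^k, Θ)` is downward directed if every edge `(x, y)`
satisfies `max(x) > max(y)`. -/
def Downward {k : ℕ} (Θ : Set ((Fin k → ℕ) × (Fin k → ℕ))) : Prop :=
  ∀ e ∈ Θ, maxv e.2 < maxv e.1

/-- Two `k`-tuples are order equivalent if they have the same order type:
corresponding coordinates compare the same way. -/
def OrdEquiv {k : ℕ} (x y : Fin k → ℕ) : Prop :=
  ∀ i j : Fin k, (x i < x j ↔ y i < y j) ∧ (x i = x j ↔ y i = y j)

/-- A function with a finite domain `dom ⊆ N^k` (values outside `dom` are irrelevant). -/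
structure FinFn (k : ℕ) where
  dom : Finset (Fin k → ℕ)
  toFun : (Fin k → ℕ) → ℕ

/-- `field(D)`: the set of all coordinates of elements of `D`. -/
def fieldSet {k : ℕ} (D : Finset (Fin k → ℕ)) : Set ℕ :=
  {n | ∃ z ∈ D, ∃ i : Fin k, z i = n}

/-- A family is full if every finite `D ⊆ N^k` is the domain of some member. -/
def FullFam {k : ℕ} (S : Set (FinFn k)) : Prop :=
  ∀ D : Finset (Fin k → ℕ), ∃ f ∈ S, f.dom = D

/-- A family is reflexive if each member takes values in the field of its domain. -/
def ReflexiveFam {k : ℕ} (S : Set (FinFn k)) : Prop :=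
  ∀ f ∈ S, ∀ x ∈ f.dom, f.toFun x ∈ fieldSet f.dom

/-- The jump free condition: if `x ∈ A ∩ B`, `A_x ⊆ B_x`
(`D_x = {z ∈ D : max(z) < max(x)}`), and `f_A = f_B` on `A_x`,
then `f_A(x) ≥ f_B(x)`. -/
def JumpFreeFam {k : ℕ} (S : Set (FinFn k)) : Prop :=
  ∀ fA ∈ S, ∀ fB ∈ S, ∀ x : Fin k → ℕ, x ∈ fA.dom → x ∈ fB.dom →
    (∀ z ∈ fA.dom, maxv z < maxv x → z ∈ fB.dom) →
    (∀ y ∈ fA.dom, maxv y < maxv x → fA.toFun y = fB.toFun y) →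
    fB.toFun x ≤ fA.toFun x

/-- A family is decreasing if whenever `domain(f) ⊆ domain(g)` one has
`f(x) ≥ g(x)` for all `x ∈ domain(f)`. -/
def DecreasingFam {k : ℕ} (S : Set (FinFn k)) : Prop :=
  ∀ f ∈ S, ∀ g ∈ S, f.dom ⊆ g.dom → ∀ x ∈ f.dom, g.toFun x ≤ f.toFun x

/-- `f` is regressively regular over `E`: for each order type of `k`-tuples,
either `f(x) = f(y) < min(E)` for all `x, y ∈ E^k` of that order type, or
`f(x) ≥ min(x)` for all `x ∈ E^k` of that order type. -/
def RegReg {k : ℕ} (f : (Fin k → ℕ) → ℕ) (E : Set ℕ) : Prop :=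
  ∀ x : Fin k → ℕ, (∀ i, x i ∈ E) →
    (∀ y : Fin k → ℕ, (∀ i, y i ∈ E) → OrdEquiv x y → f y = f x ∧ f x < sInf E) ∨
    (∀ y : Fin k → ℕ, (∀ i, y i ∈ E) → OrdEquiv x y → minv y ≤ f y)

theorem ramsey_aux {K : Type*} [Finite K] (n : ℕ) : ∀ (c : Finset ℕ → K) (X : Set ℕ), X.Infinite →
    ∃ Y ⊆ X, Y.Infinite ∧ ∃ κ, ∀ s : Finset ℕ, (∀ a ∈ s, a ∈ Y) → s.card = n → c s = κ := by
  induction n with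
  | zero =>
    intro c X hX
    refine ⟨X, subset_rfl, hX, c ∅, fun s _ h => ?_⟩
    rw [Finset.card_eq_zero.mp h]
  | succ n ih =>
    intro c X hX
    have step : ∀ Z : {Z : Set ℕ // Z.Infinite}, ∃ (x : ℕ) (W : {Z : Set ℕ // Z.Infinite}) (κ : K),
        x ∈ Z.1 ∧ W.1 ⊆ Z.1 ∧ (∀ y ∈ W.1, x < y) ∧
        ∀ s : Finset ℕ, (∀ a ∈ s, a ∈ W.1) → s.card = n → c (insert x s) = κ := by
      rintro ⟨Z, hZ⟩
      obtain ⟨x, hx⟩ := hZ.nonempty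
      have h1 : (Z \ Set.Iic x).Infinite := hZ.sdiff (Set.finite_Iic x)
      obtain ⟨Y, hY, hYi, κ, hκ⟩ := ih (fun s => c (insert x s)) _ h1
      refine ⟨x, ⟨Y, hYi⟩, κ, hx, fun y hy => (hY hy).1, fun y hy => ?_, hκ⟩
      have := (hY hy).2
      simpa using this
    choose g W κ h1 h2 h3 h4 using step
    let Q : ℕ → {Z : Set ℕ // Z.Infinite} := fun i => Nat.rec ⟨X, hX⟩ (fun _ Z => W Z) i
    have hQ : ∀ i, Q (i+1) = W (Q i) := fun i => rfl
    have hanti : Antitone (fun i => (Q i).1) := antitone_nat_of_succ_le (fun i => h2 (Q i))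
    let x : ℕ → ℕ := fun i => g (Q i)
    have hxQ : ∀ i j, i < j → x j ∈ (W (Q i)).1 := fun i j hij =>
      hanti (show i + 1 ≤ j from hij) (h1 (Q j))
    have hx : StrictMono x := fun i j hij => h3 (Q i) _ (hxQ i j hij)
    obtain ⟨κ0, hκ0⟩ := Finite.exists_infinite_fiber (fun i => κ (Q i))
    have hinf : ((fun i => κ (Q i)) ⁻¹' {κ0}).Infinite := Set.infinite_coe_iff.mp hκ0
    refine ⟨x '' ((fun i => κ (Q i)) ⁻¹' {κ0}), ?_, hinf.image hx.injective.injOn, κ0, ?_⟩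
    · rintro _ ⟨i, _, rfl⟩
      exact hanti (Nat.zero_le i) (h1 (Q i))
    · intro s hs hcard
      have hne : s.Nonempty := Finset.card_pos.mp (by omega)
      obtain ⟨i, hi, hix⟩ := hs _ (s.min'_mem hne)
      have := h4 (Q i) (s.erase (s.min' hne)) ?_ ?_
      · change c (insert (x i) _) = _ at this
        rw [hix, Finset.insert_erase (s.min'_mem hne)] at this
        rw [this]; exact hi
      · intro a ha
        have ha' := Finset.mem_of_mem_erase ha
        obtain ⟨j, hj, rfl⟩ := hs a ha'
        apply hxQ
        rw [← hx.lt_iff_lt, hix]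
        exact lt_of_le_of_ne (s.min'_le _ ha') (Finset.ne_of_mem_erase ha).symm
      · rw [Finset.card_erase_of_mem (s.min'_mem hne), hcard]; rfl

theorem homog_aux {k : ℕ} (φ : Finset ℕ → (Fin k → ℕ) → ℕ)
    (hφ : ∀ s x, (∀ i, x i ∈ s) → φ s x ∈ s) (n : ℕ) (X : Set ℕ) (hX : X.Infinite) :
    ∃ Y ⊆ X, Y.Infinite ∧ ∃ F : (Fin k → ℕ) → ℕ, ∀ v : Fin k → ℕ, (∀ i, v i < n) →
      ∀ a : ℕ → ℕ, StrictMono a → (∀ j, a j ∈ Y) →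
        φ ((Finset.range n).image a) (fun i => a (v i)) = a (F v) := by
  obtain ⟨Y, hYX, hY, G, hG⟩ := ramsey_aux n (K := Set ((Fin k → Fin n) × Fin n))
    (fun s => {q | ∃ h : s.card = n, φ s (fun i => s.orderEmbOfFin h (q.1 i)) =
      s.orderEmbOfFin h q.2}) X hX
  have key : ∀ a : ℕ → ℕ, StrictMono a → (∀ j, a j ∈ Y) → ∀ (u : Fin k → Fin n) (j : Fin n),
      (u, j) ∈ G ↔ φ ((Finset.range n).image a) (fun i => a (u i)) = a j := by
    intro a ha haY u j
    have hc : ((Finset.range n).image a).card = n := by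
      rw [Finset.card_image_of_injective _ ha.injective, Finset.card_range]
    have he : (fun i : Fin n => a i) = ((Finset.range n).image a).orderEmbOfFin hc := by
      apply Finset.orderEmbOfFin_unique
      · intro i; exact Finset.mem_image_of_mem _ (Finset.mem_range.mpr i.2)
      · intro i j hij; exact ha hij
    have he' : ∀ i, ((Finset.range n).image a).orderEmbOfFin hc i = a i :=
      fun i => (congrFun he i).symm
    have h0 : ∀ b ∈ (Finset.range n).image a, b ∈ Y := by
      intro b hb
      obtain ⟨j, _, rfl⟩ := Finset.mem_image.mp hb
      exact haY j
    rw [← hG _ h0 hc]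
    simp only [Set.mem_ofPred_eq]
    constructor
    · rintro ⟨_, h⟩
      simpa only [he'] using h
    · intro h
      refine ⟨hc, ?_⟩
      simpa only [he'] using h
  have hex : ∀ v : Fin k → ℕ, ∃ q : ℕ, (∀ i, v i < n) →
      ∀ a : ℕ → ℕ, StrictMono a → (∀ j, a j ∈ Y) →
        φ ((Finset.range n).image a) (fun i => a (v i)) = a q := by
    intro v
    by_cases hv : ∀ i, v i < n
    · have hb := Nat.nth_strictMono (p := (· ∈ Y)) hY
      have hbY : ∀ j, Nat.nth (· ∈ Y) j ∈ Y := fun j => Nat.nth_mem_of_infinite (p := (· ∈ Y)) hY j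
      have hm := hφ ((Finset.range n).image (Nat.nth (· ∈ Y))) (fun i => Nat.nth (· ∈ Y) (v i))
        (fun i => Finset.mem_image_of_mem _ (Finset.mem_range.mpr (hv i)))
      obtain ⟨q, hq, hq2⟩ := Finset.mem_image.mp hm
      have hq' := Finset.mem_range.mp hq
      have hGm := (key _ hb hbY (fun i => ⟨v i, hv i⟩) ⟨q, hq'⟩).mpr hq2.symm
      exact ⟨q, fun _ a ha haY => (key a ha haY _ _).mp hGm⟩
    · exact ⟨0, fun h => absurd h hv⟩
  choose F hF using hex
  exact ⟨Y, hYX, hY, F, hF⟩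

theorem chain_aux {k : ℕ} (φ : Finset ℕ → (Fin k → ℕ) → ℕ)
    (hφ : ∀ s x, (∀ i, x i ∈ s) → φ s x ∈ s) :
    ∃ (H : ℕ → Set ℕ) (F : ℕ → (Fin k → ℕ) → ℕ), Antitone H ∧ (∀ n, (H n).Infinite) ∧
      ∀ n, ∀ v : Fin k → ℕ, (∀ i, v i < n) →
      ∀ a : ℕ → ℕ, StrictMono a → (∀ j, a j ∈ H n) →
        φ ((Finset.range n).image a) (fun i => a (v i)) = a (F n v) := by
  have step : ∀ (n : ℕ) (X : {Z : Set ℕ // Z.Infinite}), ∃ (Y : {Z : Set ℕ // Z.Infinite})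
      (F : (Fin k → ℕ) → ℕ), Y.1 ⊆ X.1 ∧ ∀ v : Fin k → ℕ, (∀ i, v i < n) →
      ∀ a : ℕ → ℕ, StrictMono a → (∀ j, a j ∈ Y.1) →
        φ ((Finset.range n).image a) (fun i => a (v i)) = a (F v) := by
    rintro n ⟨X, hX⟩
    obtain ⟨Y, h1, h2, F, h3⟩ := homog_aux φ hφ n X hX
    exact ⟨⟨Y, h2⟩, F, h1, h3⟩
  choose W G h1 h2 using step
  let Q : ℕ → {Z : Set ℕ // Z.Infinite} :=
    fun i => Nat.rec ⟨Set.univ, Set.infinite_univ⟩ (fun n Z => W n Z) i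
  refine ⟨fun n => (Q (n+1)).1, fun n => G n (Q n), antitone_nat_of_succ_le (fun i => ?_),
    fun n => (Q (n+1)).2, fun n => h2 n (Q n)⟩
  exact h1 (i+1) (Q (i+1))

/-- The interpolating map. -/
theorem theta_aux {k : ℕ} (n N : ℕ) (hn : n ≤ N) (v w : Fin k → ℕ) (hv : ∀ i, v i < n)
    (hw : ∀ i, N ≤ w i) (hg : ∀ i j, v i < v j → w i + N ≤ w j) (he : ∀ i j, v i = v j → w i = w j) :
    ∃ θ : ℕ → ℕ, StrictMono θ ∧ (∀ i, θ (v i) = w i) ∧ (∀ j, (∀ i, j < v i) → θ j = j) ∧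
      ∀ M, (∀ i, w i ≤ M) → ∀ j, θ j ≤ M + j := by
  have hex : ∀ j, ∃ t, (∀ i, v i ≤ j → (∀ i', v i' ≤ j → v i' ≤ v i) → t = w i + (j - v i)) ∧
      ((∀ i, j < v i) → t = j) := by
    intro j
    by_cases h : ∃ i, v i ≤ j
    · obtain ⟨i0, hi0⟩ := h
      have := Finset.exists_max_image (Finset.univ.filter (fun i => v i ≤ j)) v
        ⟨i0, by simpa using hi0⟩
      obtain ⟨i, hi, hmax⟩ := this
      simp at hi hmax
      refine ⟨w i + (j - v i), fun i' hi' hm => ?_, fun h => absurd hi0 (by have := h i0; omega)⟩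
      have h1 : v i = v i' := le_antisymm (hm i hi) (hmax i' hi')
      rw [h1, he _ _ h1]
    · push Not at h
      exact ⟨j, fun i hi => absurd hi (by have := h i; omega), fun _ => rfl⟩
  choose θ h1 h2 using hex
  have hcase : ∀ j, (∀ i, j < v i) ∨ ∃ i, v i ≤ j ∧ ∀ i', v i' ≤ j → v i' ≤ v i := by
    intro j
    by_cases h : ∃ i, v i ≤ j
    · obtain ⟨i0, hi0⟩ := h
      have := Finset.exists_max_image (Finset.univ.filter (fun i => v i ≤ j)) v
        ⟨i0, by simpa using hi0⟩
      obtain ⟨i, hi, hmax⟩ := this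
      simp at hi hmax
      exact Or.inr ⟨i, hi, hmax⟩
    · push Not at h
      exact Or.inl h
  refine ⟨θ, ?_, fun i => ?_, h2, ?_⟩
  · intro j j' hjj
    rcases hcase j with hj | ⟨i, hi, him⟩
    · rw [h2 j hj]
      rcases hcase j' with hj' | ⟨i', hi', him'⟩
      · rw [h2 j' hj']; exact hjj
      · rw [h1 j' i' hi' him']
        have := hj i'; have := hv i'; have := hw i'; omega
    · rw [h1 j i hi him]
      rcases hcase j' with hj' | ⟨i', hi', him'⟩
      · have := hj' i; omega
      · rw [h1 j' i' hi' him']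
        rcases lt_trichotomy (v i) (v i') with h | h | h
        · have := hg _ _ h
          have := hv i'
          have : j < v i' := by
            by_contra hc
            have := him i' (by omega); omega
          omega
        · have := he _ _ h; omega
        · have := him' i (by omega); omega
  · rw [h1 (v i) i le_rfl (fun _ h => h)]; omega
  · intro M hM j
    rcases hcase j with hj | ⟨i, hi, him⟩
    · rw [h2 j hj]; omega
    · rw [h1 j i hi him]
      have := hM i; omega

theorem ordEquiv_symm' {k : ℕ} {x y : Fin k → ℕ} (h : OrdEquiv x y) : OrdEquiv y x :=
  fun i j => ⟨(h i j).1.symm, (h i j).2.symm⟩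

theorem ordEquiv_trans' {k : ℕ} {x y z : Fin k → ℕ} (h : OrdEquiv x y) (h' : OrdEquiv y z) :
    OrdEquiv x z :=
  fun i j => ⟨(h i j).1.trans (h' i j).1, (h i j).2.trans (h' i j).2⟩

theorem ordEquiv_comp {k : ℕ} {a : ℕ → ℕ} (ha : StrictMono a) (x : Fin k → ℕ) :
    OrdEquiv (fun i => a (x i)) x :=
  fun _ _ => ⟨ha.lt_iff_lt, ha.injective.eq_iff⟩

theorem minv_le {k : ℕ} (x : Fin k → ℕ) (i : Fin k) : minv x ≤ x i :=
  Nat.sInf_le (Set.mem_range_self i)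

theorem ncard_aux {k : ℕ} (f : (Fin k → ℕ) → ℕ) (E : Finset ℕ) (h : RegReg f (E : Set ℕ)) :
    {n : ℕ | ∃ x : Fin k → ℕ, (∀ i, x i ∈ E) ∧ f x = n ∧ n < minv x}.ncard ≤ k ^ k := by
  have hr : ∀ (x : Fin k → ℕ) (i : Fin k),
      ((Finset.univ.image x).filter (· < x i)).card < k := by
    intro x i
    refine lt_of_lt_of_le (Finset.card_lt_card (Finset.filter_ssubset.mpr
      ⟨x i, by simp, by simp⟩)) (Finset.card_image_le.trans (by simp))
  let rk : (Fin k → ℕ) → (Fin k → Fin k) := fun x i => ⟨_, hr x i⟩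
  have hlt : ∀ x i j, x i < x j ↔ rk x i < rk x j := by
    intro x
    have h1 : ∀ i j, x i < x j → rk x i < rk x j := by
      intro i j hij
      rw [Fin.lt_def]
      simp only [rk]
      apply Finset.card_lt_card
      refine Finset.ssubset_iff_subset_ne.mpr ⟨?_, ?_⟩
      · intro b hb
        simp only [Finset.mem_filter] at hb ⊢
        exact ⟨hb.1, hb.2.trans hij⟩
      · intro he
        have : x i ∈ (Finset.univ.image x).filter (· < x i) := by
          rw [he]; simp [hij]
        simp at this
    intro i j
    refine ⟨h1 i j, fun hh => ?_⟩
    by_contra hc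
    rcases lt_or_eq_of_le (not_lt.mp hc) with h' | h'
    · exact lt_asymm hh (h1 _ _ h')
    · have : rk x i = rk x j := by simp only [rk, h']
      exact absurd hh (by rw [this]; exact lt_irrefl _)
  have hoe : ∀ x y, rk x = rk y → OrdEquiv x y := by
    intro x y hxy i j
    have h1 : ∀ i j, x i < x j ↔ y i < y j := fun i j => by rw [hlt, hlt y, hxy]
    refine ⟨h1 i j, ?_⟩
    have := h1 i j; have := h1 j i; omega
  set T := {n : ℕ | ∃ x : Fin k → ℕ, (∀ i, x i ∈ E) ∧ f x = n ∧ n < minv x} with hT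
  have hch : ∀ n, ∃ x : Fin k → ℕ, n ∈ T → ((∀ i, x i ∈ E) ∧ f x = n ∧ n < minv x) := by
    intro n
    by_cases hn : n ∈ T
    · obtain ⟨x, hx⟩ := hn
      exact ⟨x, fun _ => hx⟩
    · exact ⟨fun _ => 0, fun h => absurd h hn⟩
  choose X hX using hch
  have := Set.ncard_le_ncard_of_injOn (s := T) (t := (Set.univ : Set (Fin k → Fin k)))
    (fun n => rk (X n)) (fun _ _ => Set.mem_univ _) ?_ Set.finite_univ
  · refine this.trans ?_
    rw [Set.ncard_univ, Nat.card_eq_fintype_card]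
    simp
  · intro n hn m hm hnm
    obtain ⟨a1, a2, a3⟩ := hX n hn
    obtain ⟨b1, b2, b3⟩ := hX m hm
    rcases h (X n) a1 with h' | h'
    · have := (h' (X m) b1 (hoe _ _ hnm)).1
      rw [← a2, ← b2, this]
    · have := h' (X n) a1 (hoe _ _ rfl)
      omega

/-- Decreasing class theorem: for `k, p ≥ 2` and a full,
decreasing family `S ⊆ T(k)` of reflexive functions, there are `E ⊆ A ⊆ N`
with `|E| = p` and `f ∈ S` with domain `A^k` such that `f` is regressively
regular over `E`; in particular, `f` has at most `k^k` regressive values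
on `E^k`. -/
theorem stmt2 (k p : ℕ) (hk : 2 ≤ k) (hp : 2 ≤ p) (S : Set (FinFn k))
    (hrefl : ReflexiveFam S) (hfull : FullFam S) (hdec : DecreasingFam S) :
    ∃ (E A : Finset ℕ) (f : FinFn k), f ∈ S ∧ E ⊆ A ∧ E.card = p ∧
      f.dom = Fintype.piFinset (fun _ : Fin k => A) ∧
      RegReg f.toFun (E : Set ℕ) ∧
      {n : ℕ | ∃ x : Fin k → ℕ, (∀ i, x i ∈ E) ∧ f.toFun x = n ∧
        n < minv x}.ncard ≤ k ^ k := by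
  choose D hDS hDd using hfull
  let cube : Finset ℕ → Finset (Fin k → ℕ) := fun A => Fintype.piFinset (fun _ : Fin k => A)
  let φ : Finset ℕ → (Fin k → ℕ) → ℕ := fun A => (D (cube A)).toFun
  have hcube : ∀ A x, x ∈ (D (cube A)).dom ↔ ∀ i, x i ∈ A := by
    intro A x; rw [hDd]; exact Fintype.mem_piFinset
  have hφ : ∀ s x, (∀ i, x i ∈ s) → φ s x ∈ s := by
    intro s x hx
    obtain ⟨z, hz, i, hi⟩ := hrefl _ (hDS (cube s)) x ((hcube s x).mpr hx)
    have := (hcube s z).mp hz i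
    rw [hi] at this; exact this
  have hmono : ∀ s t x, s ⊆ t → (∀ i, x i ∈ s) → φ t x ≤ φ s x := by
    intro s t x hst hx
    refine hdec _ (hDS _) _ (hDS _) (fun y hy => ?_) x ((hcube s x).mpr hx)
    rw [hcube] at hy ⊢
    exact fun i => hst (hy i)
  obtain ⟨H, F, hH, hHi, hF⟩ := chain_aux φ hφ
  -- regressive patterns
  let P : (Fin k → ℕ) → ℕ → Prop := fun e q => ∃ (n : ℕ) (v : Fin k → ℕ),
    OrdEquiv e v ∧ (∀ i, v i < n) ∧ F n v = q ∧ ∀ i, q < v i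
  have hP : ∀ e e', OrdEquiv e e' → ∀ q, P e q → P e' q := by
    rintro e e' hee q ⟨n, v, h1, h2⟩
    exact ⟨n, v, ordEquiv_trans' (ordEquiv_symm' hee) h1, h2⟩
  have hN : ∀ e : Fin k → Fin p, ∃ n0 : ℕ, ∀ q, P (fun i => e i) q → ∃ (n : ℕ) (v : Fin k → ℕ) (q0 : ℕ),
      n ≤ n0 ∧ OrdEquiv (fun i => (e i : ℕ)) v ∧ (∀ i, v i < n) ∧ F n v = q0 ∧ (∀ i, q0 < v i) ∧
      ∀ q', P (fun i => e i) q' → q0 ≤ q' := by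
    intro e
    by_cases h : ∃ q, P (fun i => e i) q
    · obtain ⟨n, v, h1, h2, h3, h4⟩ := Nat.find_spec h
      exact ⟨n, fun _ _ => ⟨n, v, Nat.find h, le_rfl, h1, h2, h3, h4, fun q' hq' => Nat.find_min' h hq'⟩⟩
    · exact ⟨0, fun q hq => absurd ⟨q, hq⟩ h⟩
  choose n0 hn0 using hN
  obtain ⟨N, hN0, hN⟩ : ∃ N, 0 < N ∧ ∀ e, n0 e ≤ N :=
    ⟨Finset.univ.sup n0 + 1, by omega, fun e =>
      (Finset.le_sup (f := n0) (Finset.mem_univ e)).trans (by omega)⟩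
  let m := N * (p + 1)
  have hNm : N ≤ m := Nat.le_mul_of_pos_right _ (by omega)
  let a : ℕ → ℕ := Nat.nth (· ∈ H m)
  have ha : StrictMono a := Nat.nth_strictMono (p := (· ∈ H m)) (hHi m)
  have haH : ∀ j, a j ∈ H m := fun j => Nat.nth_mem_of_infinite (p := (· ∈ H m)) (hHi m) j
  let A : Finset ℕ := (Finset.range m).image a
  let b : ℕ → ℕ := fun e => N * (e + 1)
  have hb : StrictMono b := fun i j hij => Nat.mul_lt_mul_of_pos_left (by omega) hN0
  let E : Finset ℕ := (Finset.range p).image (fun e => a (b e))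
  have hbm : ∀ e < p, b e + N ≤ m := by
    intro e he
    have : N * (e + 1 + 1) ≤ N * (p + 1) := Nat.mul_le_mul_left _ (by omega)
    simp only [b, m]; rw [mul_add N (e+1) 1] at this; omega
  have hx : ∀ x : Fin k → ℕ, (∀ i, x i ∈ E) → ∃ e : Fin k → Fin p, x = fun i => a (b (e i)) := by
    intro x hx
    have : ∀ i, ∃ e : Fin p, x i = a (b e) := by
      intro i
      obtain ⟨e, he, h⟩ := Finset.mem_image.mp (hx i)
      exact ⟨⟨e, Finset.mem_range.mp he⟩, h.symm⟩
    choose e he using this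
    exact ⟨e, funext he⟩
  have hoe : ∀ e : Fin k → Fin p, OrdEquiv (fun i => a (b (e i))) (fun i => (e i : ℕ)) :=
    fun e => ordEquiv_comp (ha.comp hb) (fun i => (e i : ℕ))
  have hval : ∀ e : Fin k → Fin p, φ A (fun i => a (b (e i))) = a (F m (fun i => b (e i))) := by
    intro e
    refine hF m _ (fun i => ?_) a ha haH
    have := hbm (e i) (e i).2; omega
  have hk0 : Nonempty (Fin k) := ⟨⟨0, by omega⟩⟩
  have hnon : ∀ e : Fin k → Fin p, (¬ ∃ q, P (fun i => e i) q) →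
      minv (fun i => a (b (e i))) ≤ φ A (fun i => a (b (e i))) := by
    intro e he
    by_contra hc
    push Not at hc
    apply he
    refine ⟨F m (fun i => b (e i)), m, fun i => b (e i), 
      ordEquiv_symm' (ordEquiv_comp hb (fun i => (e i : ℕ))), fun i => ?_, rfl, fun i => ?_⟩
    · have := hbm (e i) (e i).2
      show b (e i) < m
      omega
    · have := lt_of_lt_of_le hc (minv_le _ i)
      rw [hval] at this
      exact ha.lt_iff_lt.mp this
  have hreg : ∀ e : Fin k → Fin p, ∀ q, P (fun i => e i) q → ∃ q0, q0 < N ∧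
      P (fun i => e i) q0 ∧ (∀ q', P (fun i => e i) q' → q0 ≤ q') ∧
      φ A (fun i => a (b (e i))) = a q0 := by
    intro e q hq
    obtain ⟨n, v, q0, hn, h1, h2, h3, h4, h5⟩ := hn0 e q hq
    have hnN : n ≤ N := hn.trans (hN e)
    have hq0N : q0 < N := by
      obtain ⟨i⟩ := hk0
      have := h2 i; have := h4 i; omega
    refine ⟨q0, hq0N, ⟨n, v, h1, h2, h3, h4⟩, h5, ?_⟩
    obtain ⟨θ, t1, t2, t3, t4⟩ := theta_aux n N hnN v (fun i => b (e i)) h2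
      (fun i => Nat.le_mul_of_pos_right _ (by omega))
      (fun i j hij => by
        have h6 : (e i : ℕ) < e j := (h1 i j).1.mpr hij
        have : N * (e i + 1 + 1) ≤ N * (e j + 1) := Nat.mul_le_mul_left _ (by omega)
        simp only [b]; rw [mul_add N (e i + 1) 1] at this; omega)
      (fun i j hij => by
        have := (h1 i j).2.mpr hij
        simp only at this
        simp only [this])
    have haθ : StrictMono (fun j => a (θ j)) := ha.comp t1
    have hs := hF n v h2 (fun j => a (θ j)) haθ (fun j => hH (hnN.trans hNm) (haH _))
    simp only [t2, h3, t3 q0 h4] at hs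
    have hle : φ A (fun i => a (b (e i))) ≤
        φ ((Finset.range n).image (fun j => a (θ j))) (fun i => a (b (e i))) := by
      apply hmono
      · intro y hy
        obtain ⟨j, hj, rfl⟩ := Finset.mem_image.mp hy
        refine Finset.mem_image_of_mem a (Finset.mem_range.mpr ?_)
        have hj := Finset.mem_range.mp hj
        have := t4 (m - N) (fun i => by have := hbm (e i) (e i).2; omega) j
        omega
      · intro i
        exact Finset.mem_image.mpr ⟨v i, Finset.mem_range.mpr (h2 i), by simp only [t2]⟩
    rw [hs, hval] at hle
    have hle' := ha.le_iff_le.mp hle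
    have hge : q0 ≤ F m (fun i => b (e i)) := by
      apply h5
      refine ⟨m, fun i => b (e i), 
        ordEquiv_symm' (ordEquiv_comp hb (fun i => (e i : ℕ))), fun i => ?_, rfl, fun i => ?_⟩
      · have := hbm (e i) (e i).2
        show b (e i) < m
        omega
      · have : N ≤ b (e i) := Nat.le_mul_of_pos_right _ (by omega)
        show _ < b (e i)
        omega
    rw [hval, le_antisymm hle' hge]
  have hRR : RegReg (D (cube A)).toFun (E : Set ℕ) := by
    intro x hxE
    obtain ⟨e, rfl⟩ := hx x hxE
    by_cases hq : ∃ q, P (fun i => e i) q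
    · left
      obtain ⟨q, hq⟩ := hq
      obtain ⟨q0, c1, c2, c3, c4⟩ := hreg e q hq
      intro y hyE hxy
      obtain ⟨e', rfl⟩ := hx y hyE
      have hee : OrdEquiv (fun i => (e i : ℕ)) (fun i => (e' i : ℕ)) :=
        ordEquiv_trans' (ordEquiv_symm' (hoe e)) (ordEquiv_trans' hxy (hoe e'))
      obtain ⟨q1, d1, d2, d3, d4⟩ := hreg e' q (hP _ _ hee _ hq)
      have hqq : q0 = q1 := le_antisymm (c3 _ (hP _ _ (ordEquiv_symm' hee) _ d2))
        (d3 _ (hP _ _ hee _ c2))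
      change φ A _ = φ A _ ∧ φ A _ < _
      rw [c4, d4, hqq]
      refine ⟨rfl, ?_⟩
      obtain ⟨i⟩ := hk0
      have hmem := Nat.sInf_mem (s := (E : Set ℕ)) ⟨_, hxE i⟩
      obtain ⟨e2, _, he2⟩ := Finset.mem_image.mp (Finset.mem_coe.mp hmem)
      rw [← he2]
      apply ha
      have : N ≤ b e2 := Nat.le_mul_of_pos_right _ (by omega)
      omega
    · right
      intro y hyE hxy
      obtain ⟨e', rfl⟩ := hx y hyE
      have hee : OrdEquiv (fun i => (e i : ℕ)) (fun i => (e' i : ℕ)) :=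
        ordEquiv_trans' (ordEquiv_symm' (hoe e)) (ordEquiv_trans' hxy (hoe e'))
      exact hnon e' (fun ⟨q, h⟩ => hq ⟨q, hP _ _ (ordEquiv_symm' hee) _ h⟩)
  refine ⟨E, A, D (cube A), hDS _, ?_, ?_, hDd _, hRR, ncard_aux _ E hRR⟩
  · intro y hy
    obtain ⟨e, he, rfl⟩ := Finset.mem_image.mp hy
    refine Finset.mem_image_of_mem a (Finset.mem_range.mpr ?_)
    have := hbm e (Finset.mem_range.mp he); omega
  · have hinj : Function.Injective (fun e => a (b e)) := (ha.comp hb).injective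
    rw [Finset.card_image_of_injective _ hinj, Finset.card_range]
end

section
/- Let k ≥ 2, r ≥ 1, let G = (N^k, Θ) be a downward directed graph, F a partial selection function, D ⊆ N^k finite, and ρ_D : D → N a function with ρ_D(x) ≥ min(x) for all x ∈ D. Then: (i) for every x ∈ D with Φ^D_x ≠ ∅ one has h^ρ_D(x) = ŝ_D(x) < max(x); and (ii) for every E ⊆ N with E^k ⊆ D and |E| = p ≥ 2, ŝ_D is regressively regular over E if and only if h^ρ_D is regressively regular over E. -/
open scoped Classical

/-- One step of the recursion defining `Φ^D_z`: given the pair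
`prev y = (value at y, Φ^D_y ≠ ∅)` for vertices `y` below `z`, this is the set of
defined values `F[z, (y_1,n_1), …, (y_r,n_r)]` with each `y_i ∈ G_D^z` and
`n_i = prev(y_i).1` if `Φ^D_{y_i} ≠ ∅`, `n_i = min(y_i)` if `Φ^D_{y_i} = ∅`. -/
def PhiStep {k r : ℕ} (Θ : Set ((Fin k → ℕ) × (Fin k → ℕ))) (D : Set (Fin k → ℕ))
    (F : (Fin k → ℕ) → (Fin r → (Fin k → ℕ) × ℕ) → Option ℕ)
    (prev : (Fin k → ℕ) → ℕ × Prop) (z : Fin k → ℕ) : Set ℕ :=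
  {n | ∃ w : Fin r → (Fin k → ℕ) × ℕ,
    (∀ i : Fin r, (z ∈ D ∧ (w i).1 ∈ D ∧ (z, (w i).1) ∈ Θ) ∧
      (w i).2 = if (prev ((w i).1)).2 then (prev ((w i).1)).1 else minv ((w i).1)) ∧
    F z w = some n}

/-- Fuel-based recursion computing `(ŝ_D(z), Φ^D_z ≠ ∅)`; since `G` is downward
directed, fuel `max(z)` suffices, see `sD` and `PhiNEs`. -/
noncomputable def sAuxN {k r : ℕ} (Θ : Set ((Fin k → ℕ) × (Fin k → ℕ)))
    (D : Set (Fin k → ℕ)) (F : (Fin k → ℕ) → (Fin r → (Fin k → ℕ) × ℕ) → Option ℕ) :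
    ℕ → (Fin k → ℕ) → ℕ × Prop
  | 0, z =>
      (if (PhiStep Θ D F (fun y => (maxv y, False)) z).Nonempty then
        sInf (PhiStep Θ D F (fun y => (maxv y, False)) z)
      else maxv z,
      (PhiStep Θ D F (fun y => (maxv y, False)) z).Nonempty)
  | (m + 1), z =>
      (if (PhiStep Θ D F (sAuxN Θ D F m) z).Nonempty then
        sInf (PhiStep Θ D F (sAuxN Θ D F m) z)
      else maxv z,
      (PhiStep Θ D F (sAuxN Θ D F m) z).Nonempty)

/-- `ŝ_D(z)`: `max(z)` if `Φ^D_z = ∅`, else `min(Φ^D_z)`. -/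
noncomputable def sD {k r : ℕ} (Θ : Set ((Fin k → ℕ) × (Fin k → ℕ)))
    (D : Set (Fin k → ℕ)) (F : (Fin k → ℕ) → (Fin r → (Fin k → ℕ) × ℕ) → Option ℕ)
    (z : Fin k → ℕ) : ℕ :=
  (sAuxN Θ D F (maxv z) z).1

/-- The statement `Φ^D_z ≠ ∅` (computed along the recursion for `ŝ_D`). -/
def PhiNEs {k r : ℕ} (Θ : Set ((Fin k → ℕ) × (Fin k → ℕ)))
    (D : Set (Fin k → ℕ)) (F : (Fin k → ℕ) → (Fin r → (Fin k → ℕ) × ℕ) → Option ℕ)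
    (z : Fin k → ℕ) : Prop :=
  (sAuxN Θ D F (maxv z) z).2

/-- The set `Φ^D_z` for the recursion defining `ŝ_D`. -/
def PhiD {k r : ℕ} (Θ : Set ((Fin k → ℕ) × (Fin k → ℕ)))
    (D : Set (Fin k → ℕ)) (F : (Fin k → ℕ) → (Fin r → (Fin k → ℕ) × ℕ) → Option ℕ)
    (z : Fin k → ℕ) : Set ℕ :=
  PhiStep Θ D F (fun y => (sD Θ D F y, PhiNEs Θ D F y)) z

/-- Fuel-based recursion computing `(h^ρ_D(z), Φ^D_z ≠ ∅)`: same recursion as for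
`ŝ_D` except that the value is `ρ(z)` when `Φ^D_z = ∅`. -/
noncomputable def hAuxN {k r : ℕ} (Θ : Set ((Fin k → ℕ) × (Fin k → ℕ)))
    (D : Set (Fin k → ℕ)) (F : (Fin k → ℕ) → (Fin r → (Fin k → ℕ) × ℕ) → Option ℕ)
    (ρ : (Fin k → ℕ) → ℕ) : ℕ → (Fin k → ℕ) → ℕ × Prop
  | 0, z =>
      (if (PhiStep Θ D F (fun y => (maxv y, False)) z).Nonempty then
        sInf (PhiStep Θ D F (fun y => (maxv y, False)) z)
      else ρ z,
      (PhiStep Θ D F (fun y => (maxv y, False)) z).Nonempty)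
  | (m + 1), z =>
      (if (PhiStep Θ D F (hAuxN Θ D F ρ m) z).Nonempty then
        sInf (PhiStep Θ D F (hAuxN Θ D F ρ m) z)
      else ρ z,
      (PhiStep Θ D F (hAuxN Θ D F ρ m) z).Nonempty)

/-- `h^ρ_D(z)`: `ρ(z)` if `Φ^D_z = ∅`, else `min(Φ^D_z)`. -/
noncomputable def hRD {k r : ℕ} (Θ : Set ((Fin k → ℕ) × (Fin k → ℕ)))
    (D : Set (Fin k → ℕ)) (F : (Fin k → ℕ) → (Fin r → (Fin k → ℕ) × ℕ) → Option ℕ)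
    (ρ : (Fin k → ℕ) → ℕ) (z : Fin k → ℕ) : ℕ :=
  (hAuxN Θ D F ρ (maxv z) z).1

/-- The statement `Φ^D_z ≠ ∅` (computed along the recursion for `h^ρ_D`). -/
def PhiNEh {k r : ℕ} (Θ : Set ((Fin k → ℕ) × (Fin k → ℕ)))
    (D : Set (Fin k → ℕ)) (F : (Fin k → ℕ) → (Fin r → (Fin k → ℕ) × ℕ) → Option ℕ)
    (ρ : (Fin k → ℕ) → ℕ) (z : Fin k → ℕ) : Prop :=
  (hAuxN Θ D F ρ (maxv z) z).2

/-- The set `Φ^D_z` for the recursion defining `h^ρ_D`. -/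
def PhiDh {k r : ℕ} (Θ : Set ((Fin k → ℕ) × (Fin k → ℕ)))
    (D : Set (Fin k → ℕ)) (F : (Fin k → ℕ) → (Fin r → (Fin k → ℕ) × ℕ) → Option ℕ)
    (ρ : (Fin k → ℕ) → ℕ) (z : Fin k → ℕ) : Set ℕ :=
  PhiStep Θ D F (fun y => (hRD Θ D F ρ y, PhiNEh Θ D F ρ y)) z

theorem PhiStep_congr6 {k r : ℕ} (Θ : Set ((Fin k → ℕ) × (Fin k → ℕ))) (D : Set (Fin k → ℕ))
    (F : (Fin k → ℕ) → (Fin r → (Fin k → ℕ) × ℕ) → Option ℕ)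
    (p q : (Fin k → ℕ) → ℕ × Prop) (z : Fin k → ℕ)
    (h : ∀ y, (z, y) ∈ Θ → ((p y).2 ↔ (q y).2) ∧ ((p y).2 → (p y).1 = (q y).1)) :
    PhiStep Θ D F p z = PhiStep Θ D F q z := by
  ext n
  unfold PhiStep
  simp only [Set.mem_setOf_eq]
  refine exists_congr fun w => and_congr_left fun _ => forall_congr' fun i => and_congr_right ?_
  rintro ⟨_, _, hi⟩
  obtain ⟨h1, h2⟩ := h _ hi
  by_cases hp : (p (w i).1).2
  · rw [if_pos hp, if_pos (h1.1 hp), h2 hp]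
  · rw [if_neg hp, if_neg (fun hq => hp (h1.2 hq))]

/-- The previous-stage data used by the fuel recursion at fuel `m`. -/
noncomputable def prevP6 {k r : ℕ} (Θ : Set ((Fin k → ℕ) × (Fin k → ℕ)))
    (D : Set (Fin k → ℕ)) (F : (Fin k → ℕ) → (Fin r → (Fin k → ℕ) × ℕ) → Option ℕ)
    (ρ : (Fin k → ℕ) → ℕ) : ℕ → (Fin k → ℕ) → ℕ × Prop
  | 0 => fun y => (maxv y, False)
  | m + 1 => hAuxN Θ D F ρ m

theorem hAuxN_eq6 {k r : ℕ} (Θ : Set ((Fin k → ℕ) × (Fin k → ℕ)))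
    (D : Set (Fin k → ℕ)) (F : (Fin k → ℕ) → (Fin r → (Fin k → ℕ) × ℕ) → Option ℕ)
    (ρ : (Fin k → ℕ) → ℕ) (m : ℕ) (z : Fin k → ℕ) :
    hAuxN Θ D F ρ m z =
      (if (PhiStep Θ D F (prevP6 Θ D F ρ m) z).Nonempty then
        sInf (PhiStep Θ D F (prevP6 Θ D F ρ m) z) else ρ z,
      (PhiStep Θ D F (prevP6 Θ D F ρ m) z).Nonempty) := by
  cases m <;> rfl

theorem sAuxN_eq6 {k r : ℕ} (Θ : Set ((Fin k → ℕ) × (Fin k → ℕ)))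
    (D : Set (Fin k → ℕ)) (F : (Fin k → ℕ) → (Fin r → (Fin k → ℕ) × ℕ) → Option ℕ)
    (m : ℕ) : sAuxN Θ D F m = hAuxN Θ D F maxv m := by
  induction m with
  | zero => rfl
  | succ m ih =>
    funext z
    simp only [sAuxN, hAuxN, ih]

theorem step_indep6 {k r : ℕ} (Θ : Set ((Fin k → ℕ) × (Fin k → ℕ))) (hΘ : Downward Θ)
    (D : Set (Fin k → ℕ)) (F : (Fin k → ℕ) → (Fin r → (Fin k → ℕ) × ℕ) → Option ℕ)
    (ρ ρ' : (Fin k → ℕ) → ℕ) : ∀ (N : ℕ) (z : Fin k → ℕ) (m m' : ℕ), maxv z ≤ N →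
      maxv z ≤ m → maxv z ≤ m' →
      PhiStep Θ D F (prevP6 Θ D F ρ m) z = PhiStep Θ D F (prevP6 Θ D F ρ' m') z := by
  intro N
  induction N with
  | zero =>
    intro z m m' h0 _ _
    apply PhiStep_congr6
    intro y hy
    have := hΘ _ hy
    simp only at this
    omega
  | succ N ih =>
    intro z m m' h0 h1 h2
    apply PhiStep_congr6
    intro y hy
    have hlt := hΘ _ hy
    simp only at hlt
    obtain ⟨a, rfl⟩ : ∃ a, m = a + 1 := ⟨m - 1, by omega⟩
    obtain ⟨b, rfl⟩ : ∃ b, m' = b + 1 := ⟨m' - 1, by omega⟩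
    have e := ih y a b (by omega) (by omega) (by omega)
    simp only [prevP6]
    rw [hAuxN_eq6, hAuxN_eq6 Θ D F ρ' b, e]
    refine ⟨Iff.rfl, fun h => ?_⟩
    simp only at h
    simp only [if_pos h]

theorem hRD_eq6 {k r : ℕ} (Θ : Set ((Fin k → ℕ) × (Fin k → ℕ))) (hΘ : Downward Θ)
    (D : Set (Fin k → ℕ)) (F : (Fin k → ℕ) → (Fin r → (Fin k → ℕ) × ℕ) → Option ℕ)
    (ρ : (Fin k → ℕ) → ℕ) (z : Fin k → ℕ) :
    hAuxN Θ D F ρ (maxv z) z = (if (PhiD Θ D F z).Nonempty then sInf (PhiD Θ D F z) else ρ z,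
      (PhiD Θ D F z).Nonempty) := by
  have e : PhiStep Θ D F (prevP6 Θ D F ρ (maxv z)) z = PhiD Θ D F z := by
    unfold PhiD
    apply PhiStep_congr6
    intro y hy
    have hlt := hΘ _ hy
    simp only at hlt
    obtain ⟨a, ha⟩ : ∃ a, maxv z = a + 1 := ⟨maxv z - 1, by omega⟩
    rw [ha]
    simp only [prevP6, sD, PhiNEs, sAuxN_eq6]
    rw [hAuxN_eq6, hAuxN_eq6 Θ D F maxv (maxv y),
      step_indep6 Θ hΘ D F ρ maxv (maxv y) y a (maxv y) le_rfl (by omega) le_rfl]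
    refine ⟨Iff.rfl, fun h => ?_⟩
    simp only at h
    simp only [if_pos h]
  rw [hAuxN_eq6, e]

theorem minv_le6 {k : ℕ} (z : Fin k → ℕ) (i : Fin k) : minv z ≤ z i :=
  Nat.sInf_le ⟨i, rfl⟩

theorem le_maxv6 {k : ℕ} (z : Fin k → ℕ) (i : Fin k) : z i ≤ maxv z :=
  Finset.le_sup (Finset.mem_univ i)

theorem RegReg_mono6 {k : ℕ} (hk : 2 ≤ k) (f g : (Fin k → ℕ) → ℕ) (E : Set ℕ)
    (h : ∀ x : Fin k → ℕ, (∀ i, x i ∈ E) → f x = g x ∨ (minv x ≤ f x ∧ minv x ≤ g x))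
    (hf : RegReg f E) : RegReg g E := by
  have hmin : ∀ y : Fin k → ℕ, (∀ i, y i ∈ E) → sInf E ≤ minv y := by
    intro y hy
    have hne : (Set.range y).Nonempty := ⟨y ⟨0, by omega⟩, ⟨0, by omega⟩, rfl⟩
    obtain ⟨i, hi⟩ := Nat.sInf_mem hne
    unfold minv
    rw [← hi]
    exact Nat.sInf_le (hy i)
  intro x hx
  rcases hf x hx with h1 | h2
  · left
    intro y hy hxy
    obtain ⟨a, b⟩ := h1 y hy hxy
    have := hmin y hy
    have := hmin x hx
    have := h x hx
    have := h y hy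
    omega
  · right
    intro y hy hxy
    have := h2 y hy hxy
    have := h y hy
    omega

/-- with `k ≥ 2`, `r ≥ 1`, `G = (N^k, Θ)` downward directed,
`F` a partial selection function, `D ⊆ N^k` finite and `ρ_D : D → N` with
`ρ_D(x) ≥ min(x)`: (i) for every `x ∈ D` with `Φ^D_x ≠ ∅` one has
`h^ρ_D(x) = ŝ_D(x) < max(x)`; (ii) for every `E ⊆ N` with `E^k ⊆ D` and
`|E| = p ≥ 2`, `ŝ_D` is regressively regular over `E` iff `h^ρ_D` is. -/
theorem stmt6 (k r : ℕ) (hk : 2 ≤ k) (hr : 1 ≤ r)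
    (Θ : Set ((Fin k → ℕ) × (Fin k → ℕ))) (hΘ : Downward Θ)
    (F : (Fin k → ℕ) → (Fin r → (Fin k → ℕ) × ℕ) → Option ℕ)
    (hF : ∀ z w n, F z w = some n → ∃ i : Fin r, n = (w i).2)
    (D : Set (Fin k → ℕ)) (hD : D.Finite)
    (ρ : (Fin k → ℕ) → ℕ) (hρ : ∀ x ∈ D, minv x ≤ ρ x) :
    (∀ x ∈ D, (PhiD Θ D F x).Nonempty →
      hRD Θ D F ρ x = sD Θ D F x ∧ sD Θ D F x < maxv x) ∧
    (∀ (E : Finset ℕ) (p : ℕ), 2 ≤ p → E.card = p →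
      (∀ z : Fin k → ℕ, (∀ i, z i ∈ E) → z ∈ D) →
      (RegReg (sD Θ D F) (E : Set ℕ) ↔ RegReg (hRD Θ D F ρ) (E : Set ℕ))) := by
  have hmm : ∀ z : Fin k → ℕ, minv z ≤ maxv z := fun z =>
    (minv_le6 z ⟨0, by omega⟩).trans (le_maxv6 z _)
  have hh : ∀ x, hRD Θ D F ρ x =
      if (PhiD Θ D F x).Nonempty then sInf (PhiD Θ D F x) else ρ x := fun x => by
    unfold hRD; rw [hRD_eq6 Θ hΘ D F ρ x]
  have hs : ∀ x, sD Θ D F x =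
      if (PhiD Θ D F x).Nonempty then sInf (PhiD Θ D F x) else maxv x := fun x => by
    unfold sD; rw [sAuxN_eq6, hRD_eq6 Θ hΘ D F maxv x]
  have hne : ∀ x, PhiNEs Θ D F x ↔ (PhiD Θ D F x).Nonempty := fun x => by
    unfold PhiNEs; rw [sAuxN_eq6, hRD_eq6 Θ hΘ D F maxv x]
  have hlt : ∀ N x, maxv x ≤ N → (PhiD Θ D F x).Nonempty → sD Θ D F x < maxv x := by
    intro N
    induction N with
    | zero =>
      rintro x hx ⟨n, w, hw, hn⟩
      have := hΘ _ (hw ⟨0, by omega⟩).1.2.2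
      simp only at this
      omega
    | succ N ih =>
      intro x hx hx2
      have hmem := Nat.sInf_mem hx2
      rw [hs, if_pos hx2]
      obtain ⟨w, hw, hn⟩ := hmem
      obtain ⟨i, hi⟩ := hF _ _ _ hn
      have hd := hΘ _ (hw i).1.2.2
      simp only at hd
      have e := (hw i).2
      simp only [hne] at e
      rw [hi, e]
      split_ifs with hc
      · exact (ih _ (by omega) hc).trans hd
      · exact (hmm _).trans_lt hd
  have heq : ∀ x, (PhiD Θ D F x).Nonempty → hRD Θ D F ρ x = sD Θ D F x := fun x hx => by
    rw [hh, hs, if_pos hx, if_pos hx]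
  refine ⟨fun x _ hx => ⟨heq x hx, hlt _ x le_rfl hx⟩, ?_⟩
  intro E p _ _ hE
  have key : ∀ x : Fin k → ℕ, (∀ i, x i ∈ (E : Set ℕ)) → sD Θ D F x = hRD Θ D F ρ x ∨
      (minv x ≤ sD Θ D F x ∧ minv x ≤ hRD Θ D F ρ x) := by
    intro x hx
    by_cases hc : (PhiD Θ D F x).Nonempty
    · exact Or.inl (heq x hc).symm
    · right
      rw [hh, hs, if_neg hc, if_neg hc]
      exact ⟨hmm x, hρ x (hE x (fun i => by simpa using hx i))⟩
  exact ⟨RegReg_mono6 hk _ _ _ key, RegReg_mono6 hk _ _ _ fun x hx =>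
    (key x hx).imp Eq.symm And.symm⟩
end

section
/- Let k ≥ 2, r ≥ 1, let G = (N^k, Θ) be a downward directed graph, F a partial selection function, D ⊆ N^k finite, ρ_D : D → N with ρ_D(x) ≥ min(x) for all x, and let E ⊆ N with E^k ⊆ D and h^ρ_D regressively regular over E. Define E^k_L = {x ∈ E^k : h^ρ_D(x) < min(E)}, E^k_U = {x ∈ E^k : h^ρ_D(x) ≥ min(x)}, E^k_{≠∅} = {x ∈ E^k : Φ^D_x ≠ ∅} and E^k_∅ = {x ∈ E^k : Φ^D_x = ∅}. Then E^k_L ⊆ E^k_{≠∅}, and either diag(E^k) = {(e,...,e) : e ∈ E} ⊆ E^k_∅ or diag(E^k) ⊆ E^k_L. -/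
open scoped Classical

theorem PhiStep_congr {k r : ℕ} (hr : 1 ≤ r) (Θ : Set ((Fin k → ℕ) × (Fin k → ℕ)))
    (hΘ : Downward Θ) (D : Set (Fin k → ℕ))
    (F : (Fin k → ℕ) → (Fin r → (Fin k → ℕ) × ℕ) → Option ℕ)
    (p q : (Fin k → ℕ) → ℕ × Prop) (z : Fin k → ℕ)
    (h : ∀ y, maxv y < maxv z → p y = q y) :
    PhiStep Θ D F p z = PhiStep Θ D F q z := by
  ext n
  constructor
  · rintro ⟨w, hw, hn⟩
    refine ⟨w, fun i => ⟨(hw i).1, ?_⟩, hn⟩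
    rw [← h _ (hΘ _ (hw i).1.2.2)]
    exact (hw i).2
  · rintro ⟨w, hw, hn⟩
    refine ⟨w, fun i => ⟨(hw i).1, ?_⟩, hn⟩
    rw [h _ (hΘ _ (hw i).1.2.2)]
    exact (hw i).2

theorem hAuxN_form {k r : ℕ} (hr : 1 ≤ r) (Θ : Set ((Fin k → ℕ) × (Fin k → ℕ)))
    (hΘ : Downward Θ) (D : Set (Fin k → ℕ))
    (F : (Fin k → ℕ) → (Fin r → (Fin k → ℕ) × ℕ) → Option ℕ) (ρ : (Fin k → ℕ) → ℕ)
    (q : (Fin k → ℕ) → ℕ × Prop) (m : ℕ) (z : Fin k → ℕ)  (hz : maxv z ≤ m)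
    (h : ∀ n, m = n + 1 → ∀ y, maxv y < maxv z → hAuxN Θ D F ρ n y = q y) :
    hAuxN Θ D F ρ m z = (if (PhiStep Θ D F q z).Nonempty then
        sInf (PhiStep Θ D F q z) else ρ z, (PhiStep Θ D F q z).Nonempty) := by
  cases m with
  | zero =>
    rw [hAuxN, PhiStep_congr hr Θ hΘ D F _ q z (fun y hy => by omega)]
  | succ m =>
    rw [hAuxN, PhiStep_congr hr Θ hΘ D F _ q z (h m rfl)]

theorem hAuxN_stab {k r : ℕ} (hr : 1 ≤ r) (Θ : Set ((Fin k → ℕ) × (Fin k → ℕ)))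
    (hΘ : Downward Θ) (D : Set (Fin k → ℕ))
    (F : (Fin k → ℕ) → (Fin r → (Fin k → ℕ) × ℕ) → Option ℕ) (ρ : (Fin k → ℕ) → ℕ)
    (m : ℕ) : ∀ z, maxv z ≤ m → hAuxN Θ D F ρ m z = hAuxN Θ D F ρ (maxv z) z := by
  induction m using Nat.strong_induction_on with
  | _ m ih =>
    intro z hz
    rcases hz.eq_or_lt with h | h
    · rw [h]
    · rw [hAuxN_form hr Θ hΘ D F ρ (fun y => hAuxN Θ D F ρ (maxv y) y) m z hz
        (fun n hn y hy => ih n (by omega) y (by omega)),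
        hAuxN_form hr Θ hΘ D F ρ (fun y => hAuxN Θ D F ρ (maxv y) y) (maxv z) z le_rfl
        (fun n hn y hy => ih n (by omega) y (by omega))]

theorem hAuxN_eq {k r : ℕ} (hr : 1 ≤ r) (Θ : Set ((Fin k → ℕ) × (Fin k → ℕ)))
    (hΘ : Downward Θ) (D : Set (Fin k → ℕ))
    (F : (Fin k → ℕ) → (Fin r → (Fin k → ℕ) × ℕ) → Option ℕ) (ρ : (Fin k → ℕ) → ℕ)
    (z : Fin k → ℕ) : hAuxN Θ D F ρ (maxv z) z =
      (if (PhiDh Θ D F ρ z).Nonempty then sInf (PhiDh Θ D F ρ z) else ρ z,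
        (PhiDh Θ D F ρ z).Nonempty) :=
  hAuxN_form hr Θ hΘ D F ρ _ (maxv z) z le_rfl
    (fun n hn y hy => hAuxN_stab hr Θ hΘ D F ρ n y (by omega))

theorem PhiDh_lt {k r : ℕ} (hk : 2 ≤ k) (hr : 1 ≤ r)
    (Θ : Set ((Fin k → ℕ) × (Fin k → ℕ)))
    (hΘ : Downward Θ) (D : Set (Fin k → ℕ))
    (F : (Fin k → ℕ) → (Fin r → (Fin k → ℕ) × ℕ) → Option ℕ)
    (hF : ∀ z w n, F z w = some n → ∃ i : Fin r, n = (w i).2)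
    (ρ : (Fin k → ℕ) → ℕ) (m : ℕ) :
    ∀ z, maxv z = m → ∀ n ∈ PhiDh Θ D F ρ z, n < maxv z := by
  induction m using Nat.strong_induction_on with
  | _ m ih =>
    rintro z hz n ⟨w, hw, hn⟩
    obtain ⟨i, rfl⟩ := hF _ _ _ hn
    have hlt : maxv (w i).1 < maxv z := hΘ _ (hw i).1.2.2
    rw [(hw i).2]
    have e := hAuxN_eq hr Θ hΘ D F ρ (w i).1
    dsimp only
    split_ifs with hne
    · unfold PhiNEh at hne
      unfold hRD
      rw [e] at hne ⊢
      dsimp only at hne ⊢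
      rw [if_pos hne]
      exact (ih _ (hz ▸ hlt) _ rfl _ (Nat.sInf_mem hne)).trans hlt
    · refine lt_of_le_of_lt ?_ hlt
      have i0 : Fin k := ⟨0, by omega⟩
      exact (Nat.sInf_le (Set.mem_range_self i0)).trans
        (Finset.le_sup (f := (w i).1) (Finset.mem_univ i0))

/-- with `h^ρ_D` regressively regular over `E` (`E^k ⊆ D`),
one has `E^k_L ⊆ E^k_{≠∅}`, and either `diag(E^k) ⊆ E^k_∅` or
`diag(E^k) ⊆ E^k_L`. -/
theorem stmt10 (k r : ℕ) (hk : 2 ≤ k) (hr : 1 ≤ r)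
    (Θ : Set ((Fin k → ℕ) × (Fin k → ℕ))) (hΘ : Downward Θ)
    (F : (Fin k → ℕ) → (Fin r → (Fin k → ℕ) × ℕ) → Option ℕ)
    (hF : ∀ z w n, F z w = some n → ∃ i : Fin r, n = (w i).2)
    (D : Set (Fin k → ℕ)) (hD : D.Finite)
    (ρ : (Fin k → ℕ) → ℕ) (hρ : ∀ x ∈ D, minv x ≤ ρ x)
    (E : Set ℕ) (hED : ∀ z : Fin k → ℕ, (∀ i, z i ∈ E) → z ∈ D)
    (hreg : RegReg (hRD Θ D F ρ) E) :
    (∀ z : Fin k → ℕ, (∀ i, z i ∈ E) → hRD Θ D F ρ z < sInf E →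
      (PhiDh Θ D F ρ z).Nonempty) ∧
    ((∀ e ∈ E, PhiDh Θ D F ρ (fun _ : Fin k => e) = ∅) ∨
      (∀ e ∈ E, hRD Θ D F ρ (fun _ : Fin k => e) < sInf E)) := by
  have hR : ∀ z, hRD Θ D F ρ z =
      if (PhiDh Θ D F ρ z).Nonempty then sInf (PhiDh Θ D F ρ z) else ρ z := by
    intro z
    rw [hRD, hAuxN_eq hr Θ hΘ D F ρ z]
  have i0 : Fin k := ⟨0, by omega⟩
  constructor
  · intro z hz hlt
    by_contra hne
    rw [hR, if_neg hne] at hlt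
    have h1 := hρ z (hED z hz)
    have h2 : minv z ∈ Set.range z := Nat.sInf_mem ⟨_, Set.mem_range_self i0⟩
    obtain ⟨j, hj⟩ := h2
    have h3 := Nat.sInf_le (hz j)
    omega
  · have hoe : ∀ a b : ℕ, OrdEquiv (fun _ : Fin k => a) (fun _ => b) := by
      intro a b i j
      simp
    rcases E.eq_empty_or_nonempty with rfl | ⟨a, ha⟩
    · left
      intro e he
      exact he.elim
    rcases hreg (fun _ => a) (fun _ => ha) with h | h
    · right
      intro e he
      have := h (fun _ => e) (fun _ => he) (hoe a e)
      omega
    · left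
      intro e he
      by_contra hne
      have hne' := Set.nonempty_iff_ne_empty.mpr hne
      have h1 := h (fun _ => e) (fun _ => he) (hoe a e)
      rw [hR, if_pos hne'] at h1
      have h2 := PhiDh_lt hk hr Θ hΘ D F hF ρ _ _ rfl _ (Nat.sInf_mem hne')
      obtain ⟨j, hj⟩ : minv (fun _ : Fin k => e) ∈ Set.range (fun _ : Fin k => e) :=
        Nat.sInf_mem ⟨_, Set.mem_range_self i0⟩
      have h4 : maxv (fun _ : Fin k => e) ≤ e := Finset.sup_le (fun _ _ => le_rfl)
      dsimp only at hj
      omega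
end
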